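/- In the straightening law for minors, the straightening relation can be chosen content-preserving: with hypotheses as in the straightening law (S′, S″ ⊆ {1,…,m}, T′, T″ ⊆ {1,…,n}, and not both S′ ≤ S″ and T′ ≤ T″), the quadruples (S′ᵢ, T′ᵢ, S″ᵢ, T″ᵢ) and signs εᵢ with X(S′|T′)·X(S″|T″) = Σᵢ εᵢ·X(S′ᵢ|T′ᵢ)·X(S″ᵢ|T″ᵢ) for all matrices X, (S′ᵢ,T′ᵢ) < (S′,T′) and (S′ᵢ,T′ᵢ) ≤ (S″ᵢ,T″ᵢ), can additionally be chosen so that for every i, S′ᵢ ∪ S″ᵢ = S′ ∪ S″ and T′ᵢ ∪ T″ᵢ = T′ ∪ T″ as multisets (i.e., counting multiplicities). -/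

import Mathlib

open Finset

/-- The minor `X(A|B)`: the determinant of the submatrix of `X` with row indices in `A` and
column indices in `B`, taken in increasing order; `0` if `|A| ≠ |B|`. -/
def minorM {m n : ℕ} {R : Type*} [CommRing R]
    (X : Matrix (Fin m) (Fin n) R) (A : Finset (Fin m)) (B : Finset (Fin n)) : R :=
  if h : A.card = B.card then
    (Matrix.of fun i j : Fin A.card =>
      X (A.orderEmbOfFin rfl i) (B.orderEmbOfFin h.symm j)).det
  else 0

/-- The Laplace product `X{A|B} = (-1)^(ΣA+ΣB) X(A|B) X(Ã|B̃)`, where elements of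
`Fin n` are counted as the numbers `1,…,n` (so `i : Fin n` counts as `i+1`). -/
def lap {n : ℕ} {R : Type*} [CommRing R]
    (X : Matrix (Fin n) (Fin n) R) (A B : Finset (Fin n)) : R :=
  (-1 : R) ^ (∑ i ∈ A, ((i : ℕ) + 1) + ∑ j ∈ B, ((j : ℕ) + 1)) *
    (minorM X A B * minorM X Aᶜ Bᶜ)

/-- The partial order `S ≤ T` on finite subsets of a linearly ordered set:
writing `S = {s₁<⋯<s_p}` and `T = {t₁<⋯<t_q}`, it means `p ≥ q` and `s_ν ≤ t_ν` for `ν ≤ q`. -/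
def domLE {α : Type*} [LinearOrder α] (S T : Finset α) : Prop :=
  T.card ≤ S.card ∧ ∀ (ν : ℕ) (hT : ν < (T.sort (· ≤ ·)).length)
    (hS : ν < (S.sort (· ≤ ·)).length),
    (S.sort (· ≤ ·))[ν] ≤ (T.sort (· ≤ ·))[ν]

/-- A subset `S ⊆ {1,…,n}` is good if `S ≤ S̃` where `S̃` is the complement of `S`. -/
def goodSet {n : ℕ} (S : Finset (Fin n)) : Prop := domLE S Sᶜ

/-- The generic `m×n` matrix, whose entries are the indeterminates `x_{ij}`. -/
noncomputable def genX (m n : ℕ) (R : Type*) [CommRing R] :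
    Matrix (Fin m) (Fin n) (MvPolynomial (Fin m × Fin n) R) :=
  Matrix.of fun i j => MvPolynomial.X (i, j)
/-- determinant of the matrix whose rows are the vectors `Y (f i)` -/
def brk {ι K : Type*} [CommRing K] {m : ℕ} (Y : ι → Fin m → K) (f : Fin m → ι) : K :=
  Matrix.det (Matrix.of fun i => Y (f i))

/-- number of entries above `y` -/
def cntAbove {ι : Type*} [LinearOrder ι] {m : ℕ} (f : Fin m → ι) (y : ι) : ℕ :=
  ∑ i, if y < f i then 1 else 0

/-- the determinant with some of the rows fixed, as an alternating map in the others -/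
def partDet {K : Type*} [CommRing K] {m : ℕ} (P : Fin m → Prop) [DecidablePred P]
    (z : Fin m → Fin m → K) : (Fin m → K) [⋀^{i // P i}]→ₗ[K] K :=
  { (Matrix.detRowAlternating (n := Fin m) (R := K)).toMultilinearMap.domDomRestrict P
      (fun i => z i.1) with
    map_eq_zero_of_eq' := by
      intro v i j hv hij
      change Matrix.detRowAlternating _ = _
      apply AlternatingMap.map_eq_zero_of_eq (i := i.1) (j := j.1)
      · simp [i.2, j.2, hv]
      · exact fun h => hij (Subtype.ext h) }

theorem partDet_apply {K : Type*} [CommRing K] {m : ℕ} (P : Fin m → Prop) [DecidablePred P]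
    (z : Fin m → Fin m → K) (v : {i // P i} → Fin m → K) :
    partDet P z v = Matrix.det (Matrix.of fun j => if h : P j then v ⟨j, h⟩ else z j) := rfl

theorem alt_zero {K : Type*} [CommRing K] {m : ℕ} {κ : Type*} [Fintype κ] {N : Type*}
    [AddCommGroup N] [Module K N] (h : m < Fintype.card κ)
    (a : (Fin m → K) [⋀^κ]→ₗ[K] N) : a = 0 := by
  refine Module.Basis.ext_alternating (Pi.basisFun K (Fin m)) fun v hv => ?_
  have := Fintype.card_le_of_injective v hv
  simp at this; omega

section garnir
variable {ι : Type*} [LinearOrder ι] {m : ℕ}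

/-- values on the exchanged positions -/
def wv (f g : Fin m → ι) (x : ι) : {i // x < f i} ⊕ {j // ¬ x < g j} → ι :=
  Sum.elim (fun i => f i.1) (fun j => g j.1)

/-- new first row after exchange -/
def newF (f g : Fin m → ι) (x : ι) (σ : Equiv.Perm ({i // x < f i} ⊕ {j // ¬ x < g j})) :
    Fin m → ι :=
  fun i => if h : x < f i then wv f g x (σ (Sum.inl ⟨i, h⟩)) else f i

/-- new second row after exchange -/
def newG (f g : Fin m → ι) (x : ι) (σ : Equiv.Perm ({i // x < f i} ⊕ {j // ¬ x < g j})) :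
    Fin m → ι :=
  fun j => if h : ¬ x < g j then wv f g x (σ (Sum.inr ⟨j, h⟩)) else g j

theorem newFG_content (f g : Fin m → ι) (x : ι)
    (σ : Equiv.Perm ({i // x < f i} ⊕ {j // ¬ x < g j})) (φ : ι → ℕ) :
    ∑ i, φ (newF f g x σ i) + ∑ i, φ (newG f g x σ i) = ∑ i, φ (f i) + ∑ i, φ (g i) := by
  rw [← Fintype.sum_subtype_add_sum_subtype (fun i => x < f i) (fun i => φ (newF f g x σ i)),
    ← Fintype.sum_subtype_add_sum_subtype (fun i => ¬ x < g i) (fun i => φ (newG f g x σ i)),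
    ← Fintype.sum_subtype_add_sum_subtype (fun i => x < f i) (fun i => φ (f i)),
    ← Fintype.sum_subtype_add_sum_subtype (fun i => ¬ x < g i) (fun i => φ (g i))]
  have h1 : ∑ i : {i // x < f i}, φ (newF f g x σ i) =
      ∑ i : {i // x < f i}, φ (wv f g x (σ (Sum.inl i))) := by
    refine Finset.sum_congr rfl fun i _ => ?_
    simp [newF, i.2]
  have h2 : ∑ i : {i // ¬ x < f i}, φ (newF f g x σ i) = ∑ i : {i // ¬ x < f i}, φ (f i) := by
    refine Finset.sum_congr rfl fun i _ => ?_
    rw [newF, dif_neg i.2]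
  have h3 : ∑ i : {i // ¬ x < g i}, φ (newG f g x σ i) =
      ∑ i : {i // ¬ x < g i}, φ (wv f g x (σ (Sum.inr i))) := by
    refine Finset.sum_congr rfl fun i _ => ?_
    rw [newG, dif_pos i.2]
  have h4 : ∑ i : {i // ¬ ¬ x < g i}, φ (newG f g x σ i) =
      ∑ i : {i // ¬ ¬ x < g i}, φ (g i) := by
    refine Finset.sum_congr rfl fun i _ => ?_
    rw [newG, dif_neg i.2]
  have h5 := Equiv.sum_comp σ (fun k => φ (wv f g x k))
  rw [Fintype.sum_sum_type, Fintype.sum_sum_type] at h5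
  simp only [wv, Sum.elim_inl, Sum.elim_inr] at h5 h1 h3
  rw [h1, h2, h3, h4]
  omega

theorem sum_newF_le (f g : Fin m → ι) (x : ι)
    (σ : Equiv.Perm ({i // x < f i} ⊕ {j // ¬ x < g j})) (φ : ι → ℕ)
    (hφ : ∀ z, ¬ x < z → φ z = 0) :
    ∑ i, φ (newF f g x σ i) ≤ ∑ i, φ (f i) := by
  rw [← Fintype.sum_subtype_add_sum_subtype (fun i => x < f i) (fun i => φ (newF f g x σ i)),
    ← Fintype.sum_subtype_add_sum_subtype (fun i => x < f i) (fun i => φ (f i))]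
  refine Nat.add_le_add ?_ ?_
  · have h1 : ∑ i : {i // x < f i}, φ (newF f g x σ i) =
        ∑ i : {i // x < f i}, φ (wv f g x (σ (Sum.inl i))) := by
      refine Finset.sum_congr rfl fun i _ => ?_
      simp [newF, i.2]
    have h5 := Equiv.sum_comp σ (fun k => φ (wv f g x k))
    rw [Fintype.sum_sum_type, Fintype.sum_sum_type] at h5
    have h6 : ∑ j : {j // ¬ x < g j}, φ (wv f g x (Sum.inr j)) = 0 :=
      Finset.sum_eq_zero fun j _ => hφ _ j.2
    rw [h6] at h5
    rw [h1]
    simp only [wv, Sum.elim_inl] at h5 ⊢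
    omega
  · refine Finset.sum_le_sum fun i _ => ?_
    rw [newF, dif_neg i.2]

theorem cnt_newF_le (f g : Fin m → ι) (x : ι)
    (σ : Equiv.Perm ({i // x < f i} ⊕ {j // ¬ x < g j})) (y : ι) :
    cntAbove (newF f g x σ) y ≤ cntAbove f y := by
  unfold cntAbove
  by_cases hy : y < x
  · refine Finset.sum_le_sum fun i _ => ?_
    by_cases h : x < f i
    · rw [if_pos (hy.trans h)]; split_ifs <;> simp
    · simp [newF, h]
  · push Not at hy
    refine sum_newF_le f g x σ (fun z => if y < z then 1 else 0) fun z hz => ?_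
    exact if_neg fun h => hz (lt_of_le_of_lt hy h)

theorem cnt_newF_lt (f g : Fin m → ι) (x : ι)
    (σ : Equiv.Perm ({i // x < f i} ⊕ {j // ¬ x < g j}))
    (hσ : σ ∉ (Equiv.Perm.sumCongrHom {i // x < f i} {j // ¬ x < g j}).range) :
    cntAbove (newF f g x σ) x < cntAbove f x := by
  have h1 := mt Equiv.Perm.mem_sumCongrHom_range_of_perm_mapsTo_inl hσ
  have h2 : ∃ i, ∃ j, σ (Sum.inl i) = Sum.inr j := by
    by_contra hcon
    push Not at hcon
    apply h1
    rintro _ ⟨a, rfl⟩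
    rcases hx : σ (Sum.inl a) with a2 | b
    · exact ⟨a2, rfl⟩
    · exact absurd hx (hcon a b)
  obtain ⟨i, j, hij⟩ := h2
  unfold cntAbove
  refine Finset.sum_lt_sum (fun k _ => ?_) ⟨i.1, Finset.mem_univ _, ?_⟩
  · by_cases h : x < f k
    · rw [if_pos h]; split_ifs <;> simp
    · simp [newF, h]
  · have : ¬ x < newF f g x σ i.1 := by
      rw [newF, dif_pos i.2]
      have : (⟨i.1, i.2⟩ : {i // x < f i}) = i := rfl
      rw [this, hij]
      exact j.2
    rw [if_neg this, if_pos i.2]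
    exact Nat.zero_lt_one

theorem garnir {K : Type*} [CommRing K] (Y : ι → Fin m → K) (f g : Fin m → ι) (x : ι)
    (hx : cntAbove g x < cntAbove f x) (G : AddSubgroup K)
    (hG : ∀ σ, σ ∉ (Equiv.Perm.sumCongrHom {i // x < f i} {j // ¬ x < g j}).range →
      brk Y (newF f g x σ) * brk Y (newG f g x σ) ∈ G) :
    brk Y f * brk Y g ∈ G := by
  classical
  let a := partDet (fun i => x < f i) (fun i => Y (f i))
  let b := partDet (fun j => ¬ x < g j) (fun i => Y (g i))
  have hcard : m < Fintype.card ({i // x < f i} ⊕ {j // ¬ x < g j}) := by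
    rw [Fintype.card_sum, Fintype.card_subtype_compl, Fintype.card_fin]
    have e1 : Fintype.card {i // x < f i} = cntAbove f x := by
      rw [Fintype.card_subtype, cntAbove, Finset.card_filter]
    have e2 : Fintype.card {i // x < g i} = cntAbove g x := by
      rw [Fintype.card_subtype, cntAbove, Finset.card_filter]
    have e3 : Fintype.card {i // x < g i} ≤ m := by
      simpa using Fintype.card_subtype_le (fun i => x < g i)
    omega
  have h0 := alt_zero hcard (a.domCoprod b)
  have h1 := congrArg (fun q => LinearMap.mul' K K (q (fun k => Y (wv f g x k)))) h0
  simp only [AlternatingMap.domCoprod_apply, AlternatingMap.zero_apply, map_zero,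
    _root_.sum_apply, map_sum] at h1
  have key : ∀ σ, LinearMap.mul' K K (AlternatingMap.domCoprod.summand a b (Quotient.mk'' σ)
      (fun k => Y (wv f g x k))) = (Equiv.Perm.sign σ : ℤ) •
        (brk Y (newF f g x σ) * brk Y (newG f g x σ)) := by
    intro σ
    rw [AlternatingMap.domCoprod.summand_mk'', _root_.smul_apply, Units.smul_def, map_zsmul,
      MultilinearMap.domDomCongr_apply, MultilinearMap.domCoprod_apply, LinearMap.mul'_apply]
    simp only [AlternatingMap.coe_multilinearMap]
    congr 2
    · simp only [a, partDet_apply, brk]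
      congr 2
      ext i
      by_cases h : x < f i <;> simp [newF, h]
    · simp only [b, partDet_apply, brk]
      congr 2
      ext i
      by_cases h : x < g i <;> simp [newG, h]
  have h2 := Finset.add_sum_erase Finset.univ
    (fun q => LinearMap.mul' K K (AlternatingMap.domCoprod.summand a b q
      (fun k => Y (wv f g x k)))) (Finset.mem_univ (Quotient.mk'' 1))
  replace h1 := h2.trans h1
  rw [key 1] at h1
  have e1 : newF f g x 1 = f := by
    ext i; by_cases h : x < f i <;> simp [newF, h, wv]
  have e2 : newG f g x 1 = g := by
    ext i; by_cases h : x < g i <;> simp [newG, h, wv]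
  rw [e1, e2] at h1
  simp only [Equiv.Perm.sign_one, Units.val_one, one_smul] at h1
  rw [eq_neg_of_add_eq_zero_left h1]
  refine G.neg_mem (G.sum_mem fun q hq => ?_)
  induction q using Quotient.inductionOn' with | _ σ
  rw [key]
  refine G.zsmul_mem (hG σ fun hmem => ?_) _
  refine (Finset.mem_erase.1 hq).1 (Quotient.sound' ?_)
  rw [QuotientGroup.leftRel_apply, mul_one]
  exact Subgroup.inv_mem _ hmem

/-- The set of standard products below `f, g`. -/
def stdSet {K : Type*} [CommRing K] (Y : ι → Fin m → K) (f g : Fin m → ι) : Set K :=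
  {p | ∃ f' g' : Fin m → ι, Function.Injective f' ∧ Function.Injective g' ∧
    (∀ y, cntAbove f' y ≤ cntAbove f y) ∧ (∀ y, cntAbove f' y ≤ cntAbove g' y) ∧
    (∀ φ : ι → ℕ, ∑ i, φ (f' i) + ∑ i, φ (g' i) = ∑ i, φ (f i) + ∑ i, φ (g i)) ∧
    ((∀ y, cntAbove f' y = cntAbove f y) → ∀ y, cntAbove f y ≤ cntAbove g y) ∧
    p = brk Y f' * brk Y g'}

theorem brk_noninj {K : Type*} [CommRing K] (Y : ι → Fin m → K) (f : Fin m → ι)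
    (h : ¬ Function.Injective f) : brk Y f = 0 := by
  rw [Function.Injective] at h
  push Not at h
  obtain ⟨i, j, hij, hne⟩ := h
  refine Matrix.det_zero_of_row_eq hne ?_
  ext k
  simp [hij]

theorem straighten [Fintype ι] {K : Type*} [CommRing K] (Y : ι → Fin m → K) :
    ∀ (N : ℕ) (f g : Fin m → ι), ∑ y, cntAbove f y = N →
      Function.Injective f → Function.Injective g →
      brk Y f * brk Y g ∈ AddSubgroup.closure (stdSet Y f g) := by
  intro N
  induction N using Nat.strong_induction_on with
  | _ N ih =>
  intro f g hN hf hg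
  by_cases hle : ∀ y, cntAbove f y ≤ cntAbove g y
  · exact AddSubgroup.subset_closure
      ⟨f, g, hf, hg, fun _ => le_rfl, hle, fun _ => rfl, fun _ => hle, rfl⟩
  · push Not at hle
    obtain ⟨x, hx⟩ := hle
    refine garnir Y f g x hx _ fun σ hσ => ?_
    by_cases hf' : Function.Injective (newF f g x σ)
    swap
    · rw [brk_noninj Y _ hf', zero_mul]; exact zero_mem _
    by_cases hg' : Function.Injective (newG f g x σ)
    swap
    · rw [brk_noninj Y _ hg', mul_zero]; exact zero_mem _
    have hlt := cnt_newF_lt f g x σ hσ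
    have hsum : ∑ y, cntAbove (newF f g x σ) y < N := by
      rw [← hN]
      exact Finset.sum_lt_sum (fun y _ => cnt_newF_le f g x σ y) ⟨x, Finset.mem_univ _, hlt⟩
    refine AddSubgroup.closure_mono ?_ (ih _ hsum _ _ rfl hf' hg')
    rintro p ⟨f', g', h1, h2, h3, h4, h5, -, h7⟩
    refine ⟨f', g', h1, h2, fun y => (h3 y).trans (cnt_newF_le f g x σ y), h4, fun φ => ?_, ?_, h7⟩
    · rw [h5, newFG_content]
    · intro h
      have := h3 x
      have := h x
      omega

end garnir

theorem domLE_of {α : Type*} [LinearOrder α] (S T : Finset α) (hc : T.card ≤ S.card)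
    (h : ∀ s ∈ S, ∀ t ∈ T, t < s → ∃ (P : α → Prop) (_ : DecidablePred P), P t ∧ ¬ P s ∧
      (∀ a b, a ≤ b → P b → P a) ∧ (T.filter P).card ≤ (S.filter P).card) : domLE S T := by
  refine ⟨hc, fun ν hT hS => ?_⟩
  by_contra hlt
  rw [not_le] at hlt
  have hT' : ν < T.card := by simpa using hT
  have hS' : ν < S.card := by simpa using hS
  have eT : (T.sort (· ≤ ·))[ν] = T.orderEmbOfFin rfl ⟨ν, hT'⟩ := by
    rw [Finset.orderEmbOfFin_apply]; rfl
  have eS : (S.sort (· ≤ ·))[ν] = S.orderEmbOfFin rfl ⟨ν, hS'⟩ := by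
    rw [Finset.orderEmbOfFin_apply]; rfl
  rw [eT, eS] at hlt
  obtain ⟨P, _, h1, h2, h3, h4⟩ := h _ (Finset.orderEmbOfFin_mem S rfl _) _
    (Finset.orderEmbOfFin_mem T rfl _) hlt
  have c1 : ν + 1 ≤ (T.filter P).card := by
    have : (Finset.univ : Finset (Fin (ν + 1))).card ≤ (T.filter P).card := by
      refine Finset.card_le_card_of_injOn
        (fun k => T.orderEmbOfFin rfl (Fin.castLE hT' k)) ?_ ?_
      · intro k _
        simp only [Finset.coe_filter, Set.mem_ofPred_eq]
        refine ⟨Finset.orderEmbOfFin_mem T rfl _, h3 _ _ ?_ h1⟩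
        rw [OrderEmbedding.le_iff_le, Fin.le_def]
        have := k.2
        simp only [Fin.val_castLE]; omega
      · intro a _ b _ hab
        simpa using hab
    simpa using this
  have c2 : (S.filter P).card ≤ ν := by
    have : (S.filter P) ⊆ (Finset.univ : Finset (Fin ν)).image
        (fun k => S.orderEmbOfFin rfl (Fin.castLE hS'.le k)) := by
      intro a ha
      rw [Finset.mem_filter] at ha
      have : a ∈ Set.range (S.orderEmbOfFin rfl) := by
        rw [Finset.range_orderEmbOfFin]; exact ha.1
      obtain ⟨i, rfl⟩ := this
      have hi : i.1 < ν := by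
        by_contra hi
        refine h2 (h3 _ _ ?_ ha.2)
        rw [OrderEmbedding.le_iff_le, Fin.le_def]
        simpa using hi
      exact Finset.mem_image.2 ⟨⟨i.1, hi⟩, Finset.mem_univ _, rfl⟩
    refine (Finset.card_le_card this).trans (Finset.card_image_le.trans ?_)
    simp
  omega

section blocks
variable {m n : ℕ}

/-- Column index of the extended matrix `[X | 1]`. -/
abbrev ColIdx (m n : ℕ) := Fin n ⊕ₗ (Fin m)ᵒᵈ

/-- column of `X` -/
def cl (j : Fin n) : ColIdx m n := toLex (Sum.inl j)
/-- column of the identity -/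
def cr (r : Fin m) : ColIdx m n := toLex (Sum.inr (OrderDual.toDual r))

theorem cl_lt_cl (a b : Fin n) : (cl a : ColIdx m n) < cl b ↔ a < b := Sum.Lex.inl_lt_inl_iff
theorem cr_lt_cr (a b : Fin m) : (cr a : ColIdx m n) < cr b ↔ b < a := by
  rw [cr, cr, Sum.Lex.inr_lt_inr_iff, OrderDual.toDual_lt_toDual]
theorem cl_lt_cr (a : Fin n) (b : Fin m) : (cl a : ColIdx m n) < cr b := Sum.Lex.inl_lt_inr _ _
theorem cr_lt_cl (a : Fin n) (b : Fin m) : ¬ (cr b : ColIdx m n) < cl a := Sum.Lex.not_inr_lt_inl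
theorem cl_inj {a b : Fin n} : (cl a : ColIdx m n) = cl b ↔ a = b := by simp [cl]
theorem cr_inj {a b : Fin m} : (cr a : ColIdx m n) = cr b ↔ a = b := by simp [cr]
theorem cl_ne_cr (a : Fin n) (b : Fin m) : (cl a : ColIdx m n) ≠ cr b := by simp [cl, cr]
theorem col_cases (z : ColIdx m n) : (∃ j, z = cl j) ∨ ∃ r, z = cr r := by
  rcases h : ofLex z with j | r
  · exact Or.inl ⟨j, h⟩
  · exact Or.inr ⟨OrderDual.ofDual r, h⟩

theorem sum_col (F : ColIdx m n → ℕ) : ∑ z, F z = ∑ j, F (cl j) + ∑ r, F (cr r) :=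
  Fintype.sum_sum_type (α₁ := Fin n) (α₂ := Fin m) F

/-- the vectors: columns of `[X | 1]` -/
def colVec {K : Type*} [CommRing K] (X : Matrix (Fin m) (Fin n) K) (z : ColIdx m n) :
    Fin m → K :=
  Sum.elim (fun j r => X r j) (fun r => Pi.single (OrderDual.ofDual r) 1) (ofLex z)

theorem colVec_cl {K : Type*} [CommRing K] (X : Matrix (Fin m) (Fin n) K) (j : Fin n) :
    colVec X (cl j) = fun r => X r j := rfl
theorem colVec_cr {K : Type*} [CommRing K] (X : Matrix (Fin m) (Fin n) K) (r : Fin m) :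
    colVec X (cr r) = Pi.single r 1 := rfl

open Classical in
/-- column set -/
noncomputable def Tset (f : Fin m → ColIdx m n) : Finset (Fin n) :=
  Finset.univ.filter fun j => ∃ i, f i = cl j
open Classical in
/-- row set -/
noncomputable def Sset (f : Fin m → ColIdx m n) : Finset (Fin m) :=
  Finset.univ.filter fun r => ¬ ∃ i, f i = cr r

theorem mem_Tset (f : Fin m → ColIdx m n) (j : Fin n) : j ∈ Tset f ↔ ∃ i, f i = cl j := by
  simp [Tset]
theorem mem_Sset (f : Fin m → ColIdx m n) (r : Fin m) : r ∈ Sset f ↔ ¬ ∃ i, f i = cr r := by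
  simp [Sset]

theorem sum_f (f : Fin m → ColIdx m n) (hf : Function.Injective f) (φ : ColIdx m n → ℕ) :
    ∑ i, φ (f i) = ∑ j ∈ Tset f, φ (cl j) + ∑ r ∈ (Sset f)ᶜ, φ (cr r) := by
  classical
  have h1 : ∑ i, φ (f i) = ∑ z ∈ Finset.univ.image f, φ z := by
    rw [Finset.sum_image fun a _ b _ h => hf h]
  have h2 : ∑ z ∈ Finset.univ.image f, φ z =
      ∑ z, if z ∈ Finset.univ.image f then φ z else 0 := by
    rw [← Finset.sum_filter, Finset.filter_mem_eq_inter, Finset.univ_inter]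
  rw [h1, h2, sum_col, ← Finset.sum_filter, ← Finset.sum_filter]
  congr 1
  · refine Finset.sum_congr ?_ fun _ _ => rfl
    ext j; simp [mem_Tset]
  · refine Finset.sum_congr ?_ fun _ _ => rfl
    ext j; simp [mem_Sset]

theorem card_eq_m (f : Fin m → ColIdx m n) (hf : Function.Injective f) :
    m = (Tset f).card + (Sset f)ᶜ.card := by
  simpa using sum_f f hf (fun _ => 1)

theorem card_S_T (f : Fin m → ColIdx m n) (hf : Function.Injective f) :
    (Sset f).card = (Tset f).card := by
  have h1 := card_eq_m f hf
  have h2 := (Sset f).card_compl_add_card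
  rw [Fintype.card_fin] at h2
  omega

theorem cnt_cl (f : Fin m → ColIdx m n) (hf : Function.Injective f) (j : Fin n) :
    ((Tset f).filter (· ≤ j)).card + cntAbove f (cl j) = m := by
  have h0 := card_eq_m f hf
  have h1 := sum_f f hf (fun z => if cl j < z then 1 else 0)
  simp only [cl_lt_cl, cl_lt_cr, if_true, Finset.sum_const, smul_eq_mul, mul_one] at h1
  rw [← Finset.card_filter (fun x => j < x) (Tset f)] at h1
  have h2 := Finset.card_filter_add_card_filter_not (s := Tset f) (· ≤ j)
  simp only [not_le] at h2
  unfold cntAbove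
  omega

theorem cnt_cr (f : Fin m → ColIdx m n) (hf : Function.Injective f) (r : Fin m) :
    ((Sset f).filter (· < r)).card + cntAbove f (cr r) =
      ((Finset.univ : Finset (Fin m)).filter (· < r)).card := by
  have h1 := sum_f f hf (fun z => if cr r < z then 1 else 0)
  simp only [cr_lt_cl, cr_lt_cr, if_false, Finset.sum_const_zero, zero_add] at h1
  rw [← Finset.card_filter (fun x => x < r) (Sset f)ᶜ] at h1
  rw [cntAbove, h1, ← Finset.card_union_of_disjoint, ← Finset.filter_union,
    Finset.union_compl]
  exact Finset.disjoint_filter_filter disjoint_compl_right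

theorem dom_of_cnt (f g : Fin m → ColIdx m n) (hf : Function.Injective f)
    (hg : Function.Injective g) (h : ∀ y, cntAbove f y ≤ cntAbove g y) :
    domLE (Sset f) (Sset g) ∧ domLE (Tset f) (Tset g) := by
  have hc : (Tset g).card ≤ (Tset f).card := by
    rcases n with _ | n
    · rw [Subsingleton.elim (Tset g) (Tset f)]
    · have h1 := cnt_cl f hf (Fin.last n)
      have h2 := cnt_cl g hg (Fin.last n)
      have h3 := h (cl (Fin.last n))
      simp only [Fin.le_last, Finset.filter_true] at h1 h2
      omega
  constructor
  · refine domLE_of _ _ ?_ fun s _ t _ hts => ⟨(· < s), inferInstance, hts, lt_irrefl _,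
      fun a b hab hb => lt_of_le_of_lt hab hb, ?_⟩
    · rw [card_S_T f hf, card_S_T g hg]; exact hc
    · have h1 := cnt_cr f hf s
      have h2 := cnt_cr g hg s
      have h3 := h (cr s)
      omega
  · refine domLE_of _ _ hc fun s _ t _ hts => ⟨(· ≤ t), inferInstance, le_rfl, not_le.2 hts,
      fun a b hab hb => hab.trans hb, ?_⟩
    have h1 := cnt_cl f hf t
    have h2 := cnt_cl g hg t
    have h3 := h (cl t)
    omega

theorem content_T (f g f' g' : Fin m → ColIdx m n) (hf : Function.Injective f)
    (hg : Function.Injective g) (hf' : Function.Injective f') (hg' : Function.Injective g')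
    (h : ∀ φ : ColIdx m n → ℕ, ∑ i, φ (f' i) + ∑ i, φ (g' i) = ∑ i, φ (f i) + ∑ i, φ (g i)) :
    (Tset f').val + (Tset g').val = (Tset f).val + (Tset g).val := by
  ext j
  obtain ⟨φ, hφ⟩ : ∃ φ : ColIdx m n → ℕ, ∀ z, φ z = if cl j = z then 1 else 0 :=
    ⟨_, fun _ => rfl⟩
  have h1 := h φ
  rw [sum_f f hf φ, sum_f g hg φ, sum_f f' hf' φ, sum_f g' hg' φ] at h1
  simp only [hφ, cl_inj, cl_ne_cr, if_false, Finset.sum_const_zero, add_zero,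
    Finset.sum_ite_eq] at h1
  simp only [Multiset.count_add, Multiset.count_eq_of_nodup (Finset.nodup _), Finset.mem_val]
  exact h1

theorem content_S (f g f' g' : Fin m → ColIdx m n) (hf : Function.Injective f)
    (hg : Function.Injective g) (hf' : Function.Injective f') (hg' : Function.Injective g')
    (h : ∀ φ : ColIdx m n → ℕ, ∑ i, φ (f' i) + ∑ i, φ (g' i) = ∑ i, φ (f i) + ∑ i, φ (g i)) :
    (Sset f').val + (Sset g').val = (Sset f).val + (Sset g).val := by
  ext j
  obtain ⟨φ, hφ⟩ : ∃ φ : ColIdx m n → ℕ, ∀ z, φ z = if cr j = z then 1 else 0 :=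
    ⟨_, fun _ => rfl⟩
  have h1 := h φ
  rw [sum_f f hf φ, sum_f g hg φ, sum_f f' hf' φ, sum_f g' hg' φ] at h1
  simp only [hφ, cr_inj, (cl_ne_cr _ _).symm, if_false, Finset.sum_const_zero, zero_add,
    Finset.sum_ite_eq, Finset.mem_compl] at h1
  simp only [Multiset.count_add, Multiset.count_eq_of_nodup (Finset.nodup _), Finset.mem_val]
  split_ifs at h1 ⊢ <;> omega

/-- the row/column split -/
def splitEquiv (S : Finset (Fin m)) : Fin S.card ⊕ Fin (Sᶜ).card ≃ Fin m :=
  finSumEquivOfFinset rfl rfl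

/-- values of the standard function -/
def stdH (S : Finset (Fin m)) (T : Finset (Fin n)) (h : S.card = T.card) :
    Fin S.card ⊕ Fin (Sᶜ).card → ColIdx m n :=
  Sum.elim (fun k => cl (T.orderEmbOfFin h.symm k)) (fun k => cr (Sᶜ.orderEmbOfFin rfl k))

/-- The standard function attached to a pair of sets. -/
def stdF (S : Finset (Fin m)) (T : Finset (Fin n)) (h : S.card = T.card) :
    Fin m → ColIdx m n := fun r => stdH S T h ((splitEquiv S).symm r)

theorem stdF_inj (S : Finset (Fin m)) (T : Finset (Fin n)) (h : S.card = T.card) :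
    Function.Injective (stdF S T h) := by
  refine Function.Injective.comp ?_ (splitEquiv S).symm.injective
  rintro (a | a) (b | b) hab
  · simpa [stdH, cl_inj] using hab
  · exact absurd hab (cl_ne_cr _ _)
  · exact absurd hab.symm (cl_ne_cr _ _)
  · simpa [stdH, cr_inj] using hab

theorem exists_stdF (S : Finset (Fin m)) (T : Finset (Fin n)) (h : S.card = T.card)
    (z : ColIdx m n) : (∃ i, stdF S T h i = z) ↔ ∃ k, stdH S T h k = z :=
  ⟨fun ⟨i, hi⟩ => ⟨_, hi⟩, fun ⟨k, hk⟩ => ⟨splitEquiv S k, by simpa [stdF] using hk⟩⟩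

theorem Tset_stdF (S : Finset (Fin m)) (T : Finset (Fin n)) (h : S.card = T.card) :
    Tset (stdF S T h) = T := by
  ext j
  rw [mem_Tset, exists_stdF, ← Finset.mem_coe, ← Finset.range_orderEmbOfFin T h.symm,
    Set.mem_range]
  simp only [stdH, Sum.exists, Sum.elim_inl, Sum.elim_inr, cl_inj, (cl_ne_cr _ _).symm,
    exists_false, or_false]

theorem Sset_stdF (S : Finset (Fin m)) (T : Finset (Fin n)) (h : S.card = T.card) :
    Sset (stdF S T h) = S := by
  ext j
  rw [mem_Sset, exists_stdF, not_iff_comm, ← Finset.mem_compl, ← Finset.mem_coe,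
    ← Finset.range_orderEmbOfFin Sᶜ rfl, Set.mem_range]
  simp only [stdH, Sum.exists, Sum.elim_inl, Sum.elim_inr, cr_inj, cl_ne_cr,
    exists_false, false_or]

theorem brk_stdF {K : Type*} [CommRing K] (X : Matrix (Fin m) (Fin n) K)
    (S : Finset (Fin m)) (T : Finset (Fin n)) (h : S.card = T.card) :
    brk (colVec X) (stdF S T h) = minorM X S T := by
  rw [minorM, dif_pos h, brk, ← Matrix.det_submatrix_equiv_self (splitEquiv S),
    ← Matrix.det_transpose]
  have : (Matrix.submatrix (Matrix.of fun i => colVec X (stdF S T h i))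
      (splitEquiv S) (splitEquiv S)).transpose =
      Matrix.fromBlocks (Matrix.of fun i j : Fin S.card =>
        X (S.orderEmbOfFin rfl i) (T.orderEmbOfFin h.symm j)) 0
        (Matrix.of fun i j => X (Sᶜ.orderEmbOfFin rfl i) (T.orderEmbOfFin h.symm j)) 1 := by
    ext a b
    have hS : ∀ a, splitEquiv S (Sum.inl a) = S.orderEmbOfFin rfl a := fun a => by
      simp [splitEquiv]
    have hS' : ∀ a, splitEquiv S (Sum.inr a) = Sᶜ.orderEmbOfFin rfl a := fun a => by
      simp [splitEquiv]
    have e : stdF S T h (splitEquiv S b) = stdH S T h b := by simp [stdF]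
    rw [Matrix.transpose_apply, Matrix.submatrix_apply, Matrix.of_apply, e]
    rcases a with a | a <;> rcases b with b | b
    · simp [stdH, colVec_cl, hS]
    · simp only [stdH, colVec_cr, hS, Sum.elim_inr, Matrix.fromBlocks_apply₁₂, Matrix.zero_apply]
      refine Pi.single_eq_of_ne ?_ _
      intro hh
      have h1 := Finset.orderEmbOfFin_mem S rfl a
      have h2 := Finset.orderEmbOfFin_mem Sᶜ rfl b
      rw [hh] at h1
      exact (Finset.mem_compl.1 h2) h1
    · simp [stdH, colVec_cl, hS']
    · simp [stdH, colVec_cr, hS', Pi.single_apply, Matrix.one_apply]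
  rw [this, Matrix.det_fromBlocks_zero₁₂, Matrix.det_one, mul_one]

theorem brk_perm {K : Type*} [CommRing K] (Y : ColIdx m n → Fin m → K)
    (f g : Fin m → ColIdx m n) (hf : Function.Injective f)
    (hg : Function.Injective g) (hT : Tset f = Tset g) (hS : Sset f = Sset g) :
    brk Y f = brk Y g ∨ brk Y f = - brk Y g := by
  have hr : ∀ i, ∃ k, g k = f i := by
    intro i
    rcases col_cases (f i) with ⟨j, hj⟩ | ⟨r, hr⟩
    · have : j ∈ Tset f := (mem_Tset _ _).2 ⟨i, hj⟩
      rw [hT, mem_Tset] at this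
      rwa [hj]
    · have : r ∉ Sset f := by rw [mem_Sset, not_not]; exact ⟨i, hr⟩
      rw [hS, mem_Sset, not_not] at this
      rwa [hr]
  choose π hπ using hr
  have hinj : Function.Injective π := fun a b hab => hf (by rw [← hπ, ← hπ, hab])
  let σ : Equiv.Perm (Fin m) := Equiv.ofBijective π (Finite.injective_iff_bijective.1 hinj)
  have h1 := Matrix.det_permute σ (Matrix.of fun i => Y (g i))
  have h2 : (Matrix.of fun i => Y (g i)).submatrix σ id = Matrix.of fun i => Y (f i) := by
    ext i j
    simp [σ, hπ]
  rw [h2] at h1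
  unfold brk
  rcases Int.units_eq_one_or (Equiv.Perm.sign σ) with h3 | h3
  · left; simpa [h3] using h1
  · right; simpa [h3] using h1

theorem brk_eq {K : Type*} [CommRing K] (X : Matrix (Fin m) (Fin n) K)
    (f : Fin m → ColIdx m n) (hf : Function.Injective f) :
    brk (colVec X) f = minorM X (Sset f) (Tset f) ∨
      brk (colVec X) f = - minorM X (Sset f) (Tset f) := by
  rw [← brk_stdF X _ _ (card_S_T f hf)]
  exact brk_perm _ _ _ hf (stdF_inj _ _ _) (Tset_stdF _ _ _).symm (Sset_stdF _ _ _).symm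

end blocks

theorem closure_list {K : Type*} [CommRing K] (s : Set K) (x : K)
    (hx : x ∈ AddSubgroup.closure s) :
    ∃ (k : ℕ) (p : Fin k → K) (ε : Fin k → ℤ), (∀ i, ε i = 1 ∨ ε i = -1) ∧ (∀ i, p i ∈ s) ∧
      x = ∑ i, (ε i : K) * p i := by
  induction hx using AddSubgroup.closure_induction with
  | mem x hx => exact ⟨1, fun _ => x, fun _ => 1, fun _ => Or.inl rfl, fun _ => hx, by simp⟩
  | zero => exact ⟨0, Fin.elim0, Fin.elim0, fun i => i.elim0, fun i => i.elim0, by simp⟩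
  | add x y _ _ h1 h2 =>
    obtain ⟨k, p, ε, a, b, rfl⟩ := h1
    obtain ⟨k', p', ε', a', b', rfl⟩ := h2
    refine ⟨k + k', Fin.append p p', Fin.append ε ε', ?_, ?_, ?_⟩
    · intro i; refine Fin.addCases (fun i => ?_) (fun i => ?_) i <;> simp [a, a']
    · intro i; refine Fin.addCases (fun i => ?_) (fun i => ?_) i <;> simp [b, b']
    · simp [Fin.sum_univ_add]
  | neg x _ h1 =>
    obtain ⟨k, p, ε, a, b, rfl⟩ := h1
    refine ⟨k, p, fun i => - ε i, fun i => ?_, b, ?_⟩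
    · rcases a i with h | h <;> simp [h]
    · simp

theorem minorM_map {m n : ℕ} {K R : Type*} [CommRing K] [CommRing R] (φ : K →+* R)
    (X : Matrix (Fin m) (Fin n) K) (A : Finset (Fin m)) (B : Finset (Fin n)) :
    φ (minorM X A B) = minorM (X.map φ) A B := by
  unfold minorM
  split_ifs with h
  · rw [RingHom.map_det]; rfl
  · exact map_zero φ

/-- Remark 1: the straightening relation of Theorem 3 can be chosen content-preserving:
in addition, `S′ᵢ ∪ S″ᵢ = S′ ∪ S″` and `T′ᵢ ∪ T″ᵢ = T′ ∪ T″` as multisets. -/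
theorem statement13 {m n : ℕ} (S' S'' : Finset (Fin m)) (T' T'' : Finset (Fin n))
    (h : ¬(domLE S' S'' ∧ domLE T' T'')) :
    ∃ (k : ℕ) (S₁ S₂ : Fin k → Finset (Fin m)) (T₁ T₂ : Fin k → Finset (Fin n))
      (ε : Fin k → ℤ),
      (∀ i, ε i = 1 ∨ ε i = -1) ∧
      (∀ i, domLE (S₁ i) S' ∧ domLE (T₁ i) T' ∧ (S₁ i, T₁ i) ≠ (S', T')) ∧
      (∀ i, domLE (S₁ i) (S₂ i) ∧ domLE (T₁ i) (T₂ i)) ∧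
      (∀ i, (S₁ i).val + (S₂ i).val = S'.val + S''.val ∧
            (T₁ i).val + (T₂ i).val = T'.val + T''.val) ∧
      ∀ (R : Type*) [CommRing R] (X : Matrix (Fin m) (Fin n) R),
        minorM X S' T' * minorM X S'' T'' =
          ∑ i, (ε i : R) * (minorM X (S₁ i) (T₁ i) * minorM X (S₂ i) (T₂ i)) := by
  by_cases hc : S'.card = T'.card ∧ S''.card = T''.card
  swap
  · refine ⟨0, Fin.elim0, Fin.elim0, Fin.elim0, Fin.elim0, Fin.elim0, fun i => i.elim0,
      fun i => i.elim0, fun i => i.elim0, fun i => i.elim0, fun R _ X => ?_⟩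
    rw [Fin.sum_univ_zero]
    by_cases h1 : S'.card = T'.card
    · have h2 : ¬ S''.card = T''.card := fun h2 => hc ⟨h1, h2⟩
      rw [minorM, minorM, dif_neg h2, mul_zero]
    · rw [minorM, dif_neg h1, zero_mul]
  obtain ⟨hc1, hc2⟩ := hc
  let f := stdF S' T' hc1
  let g := stdF S'' T'' hc2
  have hf : Function.Injective f := stdF_inj _ _ _
  have hg : Function.Injective g := stdF_inj _ _ _
  have fS : Sset f = S' := Sset_stdF _ _ _
  have fT : Tset f = T' := Tset_stdF _ _ _
  have gS : Sset g = S'' := Sset_stdF _ _ _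
  have gT : Tset g = T'' := Tset_stdF _ _ _
  let X₀ := genX m n ℤ
  have key := straighten (colVec X₀) _ f g rfl hf hg
  rw [brk_stdF, brk_stdF] at key
  let s : Set (MvPolynomial (Fin m × Fin n) ℤ) := {p | ∃ S₁ S₂ T₁ T₂,
    (domLE S₁ S' ∧ domLE T₁ T' ∧ (S₁, T₁) ≠ (S', T')) ∧ (domLE S₁ S₂ ∧ domLE T₁ T₂) ∧
    (S₁.val + S₂.val = S'.val + S''.val ∧ T₁.val + T₂.val = T'.val + T''.val) ∧
    p = minorM X₀ S₁ T₁ * minorM X₀ S₂ T₂}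
  have hsub : AddSubgroup.closure (stdSet (colVec X₀) f g) ≤ AddSubgroup.closure s := by
    rw [AddSubgroup.closure_le]
    rintro p ⟨f', g', hf', hg', h1, h2, h3, h4, rfl⟩
    have hmem : minorM X₀ (Sset f') (Tset f') * minorM X₀ (Sset g') (Tset g') ∈
        AddSubgroup.closure s := by
      refine AddSubgroup.subset_closure ⟨_, _, _, _, ?_, dom_of_cnt _ _ hf' hg' h2, ?_, rfl⟩
      · have h5 := dom_of_cnt _ _ hf' hf h1
        rw [fS, fT] at h5
        refine ⟨h5.1, h5.2, fun heq => h ?_⟩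
        rw [Prod.mk.injEq] at heq
        have h6 : ∀ y, cntAbove f' y = cntAbove f y := by
          intro y
          rcases col_cases y with ⟨j, rfl⟩ | ⟨r, rfl⟩
          · have e1 := cnt_cl f' hf' j
            have e2 := cnt_cl f hf j
            rw [heq.2] at e1
            rw [fT] at e2
            omega
          · have e1 := cnt_cr f' hf' r
            have e2 := cnt_cr f hf r
            rw [heq.1] at e1
            rw [fS] at e2
            omega
        have h7 := dom_of_cnt _ _ hf hg (h4 h6)
        rwa [fS, fT, gS, gT] at h7
      · have e1 := content_S f g f' g' hf hg hf' hg' h3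
        have e2 := content_T f g f' g' hf hg hf' hg' h3
        rw [fS, gS] at e1
        rw [fT, gT] at e2
        exact ⟨e1, e2⟩
    rcases brk_eq X₀ f' hf' with e1 | e1 <;> rcases brk_eq X₀ g' hg' with e2 | e2 <;>
      rw [SetLike.mem_coe, e1, e2] <;> simpa using hmem
  obtain ⟨k, p, ε, hε, hp, hsum⟩ := closure_list s _ (hsub key)
  choose S₁ S₂ T₁ T₂ h1 h2 h3 h4 using hp
  refine ⟨k, S₁, S₂, T₁, T₂, ε, hε, h1, h2, h3, fun R _ X => ?_⟩
  let φ : MvPolynomial (Fin m × Fin n) ℤ →+* R :=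
    MvPolynomial.eval₂Hom (Int.castRingHom R) (fun q => X q.1 q.2)
  have hX : X₀.map φ = X := by
    ext i j
    simp [X₀, φ, genX]
  have := congrArg φ hsum
  simpa [h4, minorM_map, hX] using this
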